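/- arXiv:2010.07784 — 3 statements merged into one kernel-verified Lean document; each statement's English description precedes it below -/
import Mathlib

section
/- Let 0 < μ < b, 0 < d < 2μ(b−μ)/b, and z ∈ [0, b]. Then the supremum of ∫ min{s, z} dP(s) over all P ∈ 𝒫(μ,b,d) equals: z if z ∈ [0, τ₁]; μ − d(b−z)/(2(b−μ)) if z ∈ [τ₁, μ]; z(1 − d/(2μ)) if z ∈ [μ, τ₂]; and μ if z ∈ [τ₂, b], where τ₁ = μ − d(b−μ)/(2(b−μ)−d) and τ₂ = μ + dμ/(2μ−d). -/
/-!
The upper bounds are weak duality: an affine combination `α + β s + γ |s - μ|` dominating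
`min s z` on `[0, b]` has expectation `α + β μ + γ d` under every measure of the ambiguity set
(`integral_min_le_of_dual`). The four bounds come from the majorants `z`,
`s - (b - z) / (b - μ) * (s - μ)⁺`, `z - z / μ * (μ - s)⁺` and `s`, the positive parts being
expressed through `s - μ` and `|s - μ|`.

They are attained by two-point laws. The law on `{τ₁, b}` with mean `μ` and mean absolute
deviation `d` serves all `z ≤ μ`, and the law on `{0, τ₂}` serves all `z ≥ μ`. Both lie in
`[0, b]` because the condition `d < 2 μ (b - μ) / b` makes `2 (b - μ) - d` and `2 μ - d` positive
and forces `0 ≤ τ₁` and `τ₂ ≤ b`.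
-/

open MeasureTheory Set

/-- The mean-MAD ambiguity set `𝒫(μ, b, d)`: Borel probability measures on `ℝ`
supported on `[0, b]`, with mean `μ` and mean absolute deviation `d`. -/
def meanMADSet (μ b d : ℝ) : Set (Measure ℝ) :=
  {P | IsProbabilityMeasure P ∧ P (Icc 0 b) = 1 ∧
    (∫ x, x ∂P) = μ ∧ (∫ x, |x - μ| ∂P) = d}

/-- The law putting mass `p` on `x` and mass `1 - p` on `y`; a probability measure when
`0 ≤ p ≤ 1`. -/
noncomputable def twoPoint (p x y : ℝ) : Measure ℝ :=
  ENNReal.ofReal p • Measure.dirac x + ENNReal.ofReal (1 - p) • Measure.dirac y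

lemma integral_twoPoint {p : ℝ} (hp0 : 0 ≤ p) (hp1 : p ≤ 1) (x y : ℝ) (f : ℝ → ℝ) :
    ∫ s, f s ∂(twoPoint p x y) = p * f x + (1 - p) * f y := by
  have hi : ∀ a : ℝ, Integrable f (Measure.dirac a) := fun a =>
    integrable_dirac enorm_lt_top
  rw [twoPoint, integral_add_measure ((hi x).smul_measure ENNReal.ofReal_ne_top)
    ((hi y).smul_measure ENNReal.ofReal_ne_top), integral_smul_measure, integral_smul_measure,
    integral_dirac, integral_dirac, ENNReal.toReal_ofReal hp0,
    ENNReal.toReal_ofReal (sub_nonneg.2 hp1), smul_eq_mul, smul_eq_mul]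

/-- A two-point law around `μ` has mean `μ` and mean absolute deviation `d` as soon as each
side of `μ` carries half of the absolute deviation. -/
lemma twoPoint_mem {μ b d p x y : ℝ} (hp0 : 0 ≤ p) (hp1 : p ≤ 1)
    (hx0 : 0 ≤ x) (hxμ : x ≤ μ) (hμy : μ ≤ y) (hyb : y ≤ b)
    (hl : p * (μ - x) = d / 2) (hr : (1 - p) * (y - μ) = d / 2) :
    twoPoint p x y ∈ meanMADSet μ b d := by
  have hsum : ENNReal.ofReal p + ENNReal.ofReal (1 - p) = 1 := by
    rw [← ENNReal.ofReal_add hp0 (sub_nonneg.2 hp1)]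
    simp
  refine ⟨⟨?_⟩, ?_, ?_, ?_⟩
  · simp [twoPoint, hsum]
  · have hx : x ∈ Icc 0 b := ⟨hx0, by linarith⟩
    have hy : y ∈ Icc 0 b := ⟨by linarith, hyb⟩
    simp only [twoPoint, Measure.add_apply, Measure.smul_apply, smul_eq_mul,
      Measure.dirac_apply_of_mem hx, Measure.dirac_apply_of_mem hy, mul_one, hsum]
  · rw [integral_twoPoint hp0 hp1 x y (fun s => s)]
    linarith
  · rw [integral_twoPoint hp0 hp1 x y (fun s => |s - μ|), abs_of_nonpos (by linarith),
      abs_of_nonneg (by linarith)]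
    linarith

/-- Weak duality for the moment problem. -/
lemma integral_min_le_of_dual {μ b d z : ℝ} (α β γ : ℝ) {P : Measure ℝ}
    (hP : P ∈ meanMADSet μ b d)
    (h : ∀ s ∈ Icc 0 b, min s z ≤ α + β * s + γ * |s - μ|) :
    ∫ s, min s z ∂P ≤ α + β * μ + γ * d := by
  obtain ⟨hprob, hsupp, hmean, hmad⟩ := hP
  have hae : ∀ᵐ s ∂P, s ∈ Icc 0 b := (prob_compl_eq_zero_iff measurableSet_Icc).2 hsupp
  -- Continuous functions are integrable because `P` lives on a compact set.
  have hint : ∀ f : ℝ → ℝ, Continuous f → Integrable f P := fun f hf => by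
    have := hf.continuousOn.integrableOn_compact (μ := P) (isCompact_Icc (a := (0 : ℝ)) (b := b))
    rwa [IntegrableOn, Measure.restrict_eq_self_of_ae_mem hae] at this
  calc ∫ s, min s z ∂P ≤ ∫ s, (α + β * s + γ * |s - μ|) ∂P :=
        integral_mono_ae (hint _ (by fun_prop)) (hint _ (by fun_prop)) (hae.mono h)
    _ = α + β * μ + γ * d := by
        rw [integral_add (hint _ (by fun_prop)) (hint _ (by fun_prop)),
          integral_add (hint _ (by fun_prop)) (hint _ (by fun_prop)),
          integral_const_mul, integral_const_mul, hmean, hmad]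
        simp

/-- Proposition (worst-case expected claim payment of the direct insurer):
the supremum of `E_P[min{S, z}]` over `𝒫(μ,b,d)` is given by the stated
piecewise expression. -/
theorem sup_retention_meanMAD (μ b d z : ℝ)
    (hμ : 0 < μ) (hμb : μ < b) (hd0 : 0 < d) (hd : d < 2 * μ * (b - μ) / b)
    (hz : z ∈ Icc 0 b)
    (τ₁ τ₂ : ℝ)
    (hτ₁ : τ₁ = μ - d * (b - μ) / (2 * (b - μ) - d))
    (hτ₂ : τ₂ = μ + d * μ / (2 * μ - d)) :
    (z ∈ Icc 0 τ₁ →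
      IsLUB {r : ℝ | ∃ P ∈ meanMADSet μ b d, (∫ s, min s z ∂P) = r} z) ∧
    (z ∈ Icc τ₁ μ →
      IsLUB {r : ℝ | ∃ P ∈ meanMADSet μ b d, (∫ s, min s z ∂P) = r}
        (μ - d * (b - z) / (2 * (b - μ)))) ∧
    (z ∈ Icc μ τ₂ →
      IsLUB {r : ℝ | ∃ P ∈ meanMADSet μ b d, (∫ s, min s z ∂P) = r}
        (z * (1 - d / (2 * μ)))) ∧
    (z ∈ Icc τ₂ b →
      IsLUB {r : ℝ | ∃ P ∈ meanMADSet μ b d, (∫ s, min s z ∂P) = r} μ) := by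
  have hb : 0 < b := hμ.trans hμb
  have hbμ : 0 < b - μ := sub_pos.2 hμb
  have hdb : d * b < 2 * μ * (b - μ) := (lt_div_iff₀ hb).1 hd
  have hD₁ : 0 < 2 * (b - μ) - d := by
    by_contra! hc
    nlinarith
  have hD₂ : 0 < 2 * μ - d := by
    by_contra! hc
    nlinarith
  have hz0 := hz.1
  have hzb := hz.2
  have hτ₁0 : 0 ≤ τ₁ := by
    rw [hτ₁, sub_nonneg, div_le_iff₀ hD₁]
    linarith
  have hτ₁μ : τ₁ ≤ μ := by
    rw [hτ₁]
    have : 0 ≤ d * (b - μ) / (2 * (b - μ) - d) := by positivity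
    linarith
  have hτ₂b : τ₂ ≤ b := by
    rw [hτ₂, ← le_sub_iff_add_le', div_le_iff₀ hD₂]
    linarith
  have hμτ₂ : μ ≤ τ₂ := by
    rw [hτ₂]
    have : 0 ≤ d * μ / (2 * μ - d) := by positivity
    linarith
  -- The extremal laws; the masses at `b` and at `0` are forced by the deviation on that side.
  obtain ⟨p, hp⟩ : ∃ p, p = 1 - d / (2 * (b - μ)) := ⟨_, rfl⟩
  obtain ⟨q, hq⟩ : ∃ q, q = d / (2 * μ) := ⟨_, rfl⟩
  have hp0 : 0 ≤ p := by
    rw [hp, sub_nonneg, div_le_one (by positivity)]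
    linarith
  have hp1 : p ≤ 1 := by
    rw [hp]
    have : 0 ≤ d / (2 * (b - μ)) := by positivity
    linarith
  have hq0 : 0 ≤ q := by
    rw [hq]
    positivity
  have hq1 : q ≤ 1 := by
    rw [hq, div_le_one (by positivity)]
    linarith
  have hP : twoPoint p τ₁ b ∈ meanMADSet μ b d := by
    refine twoPoint_mem hp0 hp1 hτ₁0 hτ₁μ hμb.le le_rfl ?_ ?_
    · rw [hp, hτ₁]
      field_simp
      ring
    · rw [hp]
      field_simp
      ring
  have hQ : twoPoint q 0 τ₂ ∈ meanMADSet μ b d := by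
    refine twoPoint_mem hq0 hq1 le_rfl hμ.le hμτ₂ hτ₂b ?_ ?_
    · rw [hq]
      field_simp
      ring
    · rw [hq, hτ₂]
      field_simp
      ring
  have hPmean : p * τ₁ + (1 - p) * b = μ := by
    rw [← integral_twoPoint hp0 hp1 τ₁ b (fun s => s)]
    exact hP.2.2.1
  have hQmean : q * 0 + (1 - q) * τ₂ = μ := by
    rw [← integral_twoPoint hq0 hq1 0 τ₂ (fun s => s)]
    exact hQ.2.2.1
  refine ⟨fun h => ?_, fun h => ?_, fun h => ?_, fun h => ?_⟩ <;> refine IsGreatest.isLUB ⟨?_, ?_⟩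
  · refine ⟨_, hP, ?_⟩
    rw [integral_twoPoint hp0 hp1 τ₁ b (fun s => min s z), min_eq_right h.2, min_eq_right hzb]
    ring
  · rintro _ ⟨R, hR, rfl⟩
    have := integral_min_le_of_dual (z := z) z 0 0 hR fun s _ => by simp
    linarith
  · refine ⟨_, hP, ?_⟩
    rw [integral_twoPoint hp0 hp1 τ₁ b (fun s => min s z), min_eq_left h.1, min_eq_right hzb]
    have : (1 - p) * (b - z) = d * (b - z) / (2 * (b - μ)) := by
      rw [hp]
      ring
    linarith
  · rintro _ ⟨R, hR, rfl⟩
    obtain ⟨κ, hκ⟩ : ∃ κ, κ = (b - z) / (b - μ) := ⟨_, rfl⟩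
    have hκb : κ * (b - μ) = b - z := by
      rw [hκ]
      field_simp
    have hκ1 : 1 ≤ κ := by
      rw [hκ, one_le_div hbμ]
      linarith [h.2]
    have := integral_min_le_of_dual (z := z) (κ * μ / 2) (1 - κ / 2) (-κ / 2) hR fun s hs => by
      rcases le_total s μ with hsμ | hsμ
      · rw [abs_of_nonpos (by linarith)]
        linarith [min_le_left s z]
      · -- The majorant `s - κ (s - μ)` decreases on `[μ, b]` and equals `z` at `b`.
        rw [abs_of_nonneg (by linarith)]
        nlinarith [min_le_right s z, mul_nonneg (sub_nonneg.2 hκ1) (sub_nonneg.2 hs.2)]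
    have hval : d * (b - z) / (2 * (b - μ)) = κ * d / 2 := by
      rw [hκ]
      field_simp
    linarith
  · refine ⟨_, hQ, ?_⟩
    rw [integral_twoPoint hq0 hq1 0 τ₂ (fun s => min s z), min_eq_left hz0, min_eq_right h.2, hq]
    ring
  · rintro _ ⟨R, hR, rfl⟩
    obtain ⟨κ, hκ⟩ : ∃ κ, κ = z / μ := ⟨_, rfl⟩
    have hκμ : κ * μ = z := by
      rw [hκ]
      field_simp
    have hκ1 : 1 ≤ κ := by
      rw [hκ, one_le_div hμ]
      exact h.1
    have := integral_min_le_of_dual (z := z) (z / 2) (κ / 2) (-κ / 2) hR fun s hs => by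
      rcases le_total s μ with hsμ | hsμ
      · -- To the left of `μ` the majorant is the line `κ s` through the origin.
        rw [abs_of_nonpos (by linarith)]
        nlinarith [min_le_left s z, mul_nonneg (sub_nonneg.2 hκ1) hs.1]
      · rw [abs_of_nonneg (by linarith)]
        linarith [min_le_right s z]
    have hval : z * (1 - d / (2 * μ)) = z - κ * d / 2 := by
      rw [hκ]
      field_simp
    linarith
  · refine ⟨_, hQ, ?_⟩
    rw [integral_twoPoint hq0 hq1 0 τ₂ (fun s => min s z), min_eq_left hz0, min_eq_left h.1]
    exact hQmean
  · rintro _ ⟨R, hR, rfl⟩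
    have := integral_min_le_of_dual (z := z) 0 1 0 hR fun s _ => by simp
    linarith
end

section
/- Let 0 < μ < b, 0 < d < 2μ(b−μ)/b, m > 0 and z ≥ 0, and define φ(z, s) = min{ m, max{s − z, 0} }. Then the supremum of ∫ φ(z, s) dP(s) over all P ∈ 𝒫(μ,b,d) equals: min{ m, (m/(m+z))(μ − d(b−(m+z))/(2(b−μ))) } if z ≤ m+z ≤ μ; min{ m(1 − d/(2μ)), z(d/(2μ) − 1) + μ } if z ≤ μ ≤ z+m ≤ b; and min{ m(1 − d/(2μ)), dm/(2(m+z−μ)) } if μ ≤ z ≤ z+m ≤ b. -/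
/-!
The proof is linear-programming duality, with explicit primal and dual solutions.

Dual side: a function that is affine on `[0, μ]` and on `[μ, b]` and continuous at `μ` has the same
expectation under every measure in the ambiguity set, because mean and mean absolute deviation fix
`E (X - μ)⁺ = d / 2`. If it dominates the benefit function on `[0, b]`, that expectation is an upper
bound (`integral_stopLossBenefit_le`). Each of the two terms of every minimum comes from one such
dominating function.

Primal side: the bound is attained by a measure with at most three atoms
(`exists_threePoint`). Write `w = z + m` for the point where the benefit saturates.
* For `w ≤ μ`, the atoms are `w, μ, b` if such a measure exists (the benefit is then constantly `m`)
  and `0, w, b` otherwise.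
* For `z ≤ μ ≤ w`, a single measure with atoms `0` and `y = μ / (1 - d / (2μ))` gives both terms.
* For `μ ≤ z`, the same two atoms are optimal if `w ≤ y`; otherwise the atoms are `0, μ, w`.
-/

open MeasureTheory Set

/-- The insurer's benefit function in stop-loss reinsurance with retention
limit `z` and maximum coverage `m`: `φ(z, s) = min{m, max{s − z, 0}}`. -/
def stopLossBenefit (m z s : ℝ) : ℝ := min m (max (s - z) 0)

/-! ### Weak duality -/

lemma continuous_stopLossBenefit (m z : ℝ) : Continuous (stopLossBenefit m z) := by
  unfold stopLossBenefit
  fun_prop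

lemma integrable_of_mem_meanMADSet {μ b d : ℝ} {P : Measure ℝ} (hP : P ∈ meanMADSet μ b d)
    {f : ℝ → ℝ} (hf : Continuous f) : Integrable f P := by
  obtain ⟨hprob, hsupp, -, -⟩ := hP
  have hae : ∀ᵐ x ∂P, x ∈ Icc 0 b := by
    rwa [← prob_compl_eq_zero_iff measurableSet_Icc] at hsupp
  rw [← Measure.restrict_eq_self_of_ae_mem hae]
  exact hf.continuousOn.integrableOn_compact isCompact_Icc

/-- Weak duality: a piecewise affine majorant of the benefit function on `[0, b]`, with its only kink
at `μ`, bounds the expected benefit by its own expectation, which depends on `μ` and `d` alone. -/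
lemma integral_stopLossBenefit_le {μ b d m z : ℝ} (A B C : ℝ)
    (h1 : ∀ x, 0 ≤ x → x ≤ μ → stopLossBenefit m z x ≤ A + B * x)
    (h2 : ∀ x, μ ≤ x → x ≤ b → stopLossBenefit m z x ≤ A + B * x + C * (x - μ))
    {P : Measure ℝ} (hP : P ∈ meanMADSet μ b d) :
    (∫ s, stopLossBenefit m z s ∂P) ≤ A + B * μ + C * (d / 2) := by
  have hI := fun {f : ℝ → ℝ} (hf : Continuous f) => integrable_of_mem_meanMADSet hP hf
  obtain ⟨hprob, hsupp, hmean, hmad⟩ := hP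
  have hae : ∀ᵐ x ∂P, x ∈ Icc 0 b := by
    rwa [← prob_compl_eq_zero_iff measurableSet_Icc] at hsupp
  have hle : (∫ s, stopLossBenefit m z s ∂P)
      ≤ ∫ x, ((A - C / 2 * μ) + (B + C / 2) * x) + C / 2 * |x - μ| ∂P := by
    refine integral_mono_ae (hI (continuous_stopLossBenefit m z)) (hI (by fun_prop)) ?_
    filter_upwards [hae] with x hx
    rcases le_total x μ with h | h
    · rw [abs_of_nonpos (by linarith)]
      linarith [h1 x hx.1 h]
    · rw [abs_of_nonneg (by linarith)]
      linarith [h2 x h hx.2]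
  rw [integral_add (hI (by fun_prop)) (hI (by fun_prop)),
    integral_add (hI (by fun_prop)) (hI (by fun_prop)), integral_const_mul, integral_const_mul,
    integral_const, hmean, hmad] at hle
  simp only [probReal_univ, one_smul] at hle
  linarith

/-! ### Finitely supported measures -/

/-- The discrete measure with atoms `x₁, x₂, x₃` and weights `p₁, p₂, p₃` belongs to the ambiguity
set as soon as the evident finite sums have the right values, and its expected benefit is the
corresponding finite sum. -/
lemma exists_threePoint {μ b d : ℝ} (m z : ℝ) {x₁ x₂ x₃ p₁ p₂ p₃ : ℝ}
    (hx₁ : x₁ ∈ Icc 0 b) (hx₂ : x₂ ∈ Icc 0 b) (hx₃ : x₃ ∈ Icc 0 b)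
    (hp₁ : 0 ≤ p₁) (hp₂ : 0 ≤ p₂) (hp₃ : 0 ≤ p₃) (hsum : p₁ + p₂ + p₃ = 1)
    (hmean : p₁ * x₁ + p₂ * x₂ + p₃ * x₃ = μ)
    (hmad : p₁ * |x₁ - μ| + p₂ * |x₂ - μ| + p₃ * |x₃ - μ| = d) :
    ∃ P ∈ meanMADSet μ b d, (∫ s, stopLossBenefit m z s ∂P)
      = p₁ * stopLossBenefit m z x₁ + p₂ * stopLossBenefit m z x₂
        + p₃ * stopLossBenefit m z x₃ := by
  set P : Measure ℝ := ENNReal.ofReal p₁ • Measure.dirac x₁ + ENNReal.ofReal p₂ • Measure.dirac x₂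
    + ENNReal.ofReal p₃ • Measure.dirac x₃ with hPdef
  have hint : ∀ f : ℝ → ℝ, (∫ x, f x ∂P) = p₁ * f x₁ + p₂ * f x₂ + p₃ * f x₃ := by
    intro f
    have hI : ∀ p x : ℝ, Integrable f (ENNReal.ofReal p • Measure.dirac x) := fun p x =>
      (integrable_dirac (by simp)).smul_measure ENNReal.ofReal_ne_top
    rw [hPdef, integral_add_measure ((hI _ _).add_measure (hI _ _)) (hI _ _),
      integral_add_measure (hI _ _) (hI _ _)]
    simp [integral_smul_measure, ENNReal.toReal_ofReal, hp₁, hp₂, hp₃]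
  have htot : ENNReal.ofReal p₁ + ENNReal.ofReal p₂ + ENNReal.ofReal p₃ = 1 := by
    rw [← ENNReal.ofReal_add hp₁ hp₂, ← ENNReal.ofReal_add (by positivity) hp₃, hsum,
      ENNReal.ofReal_one]
  refine ⟨P, ⟨⟨?_⟩, ?_, ?_, ?_⟩, hint _⟩
  · simpa [hPdef] using htot
  · simpa [hPdef, Measure.dirac_apply' _ measurableSet_Icc, indicator_of_mem, hx₁, hx₂, hx₃,
      -mem_Icc] using htot
  · rw [hint]; exact hmean
  · rw [hint]; exact hmad

/-! ### Pointwise bounds on the benefit function -/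

lemma stopLossBenefit_le_max (m z s : ℝ) : stopLossBenefit m z s ≤ m := min_le_left _ _

lemma stopLossBenefit_of_le {m z s : ℝ} (hm : 0 ≤ m) (h : s ≤ z) : stopLossBenefit m z s = 0 := by
  rw [stopLossBenefit, max_eq_right (by linarith), min_eq_right hm]

lemma stopLossBenefit_of_ge {m z s : ℝ} (hm : 0 ≤ m) (h : m + z ≤ s) :
    stopLossBenefit m z s = m := by
  rw [stopLossBenefit, max_eq_left (by linarith), min_eq_left (by linarith)]

lemma stopLossBenefit_le_of {m z s t : ℝ} (h0 : 0 ≤ t) (h1 : s - z ≤ t) :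
    stopLossBenefit m z s ≤ t :=
  (min_le_right _ _).trans (max_le h1 h0)

/-- The chord through the origin and `(c, v)` dominates the benefit function on `[0, c]`, as soon as
`v ≥ 0` and `v ≥ c - z`. -/
lemma stopLossBenefit_le_chord {m z c v x : ℝ} (hc : 0 < c) (hz : 0 ≤ z) (hv : 0 ≤ v)
    (hcv : c - z ≤ v) (hx0 : 0 ≤ x) (hxc : x ≤ c) : stopLossBenefit m z x ≤ v / c * x := by
  refine stopLossBenefit_le_of (by positivity) ?_
  have h : (x - z) * c ≤ v * x := by nlinarith
  rw [div_mul_eq_mul_div, le_div_iff₀ hc]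
  exact h

/-! ### Saturation at or below the mean -/

/-- If `m + z ≤ μ`, the bound `m` is attained with atoms `m + z, μ, b` when these can carry the
prescribed mean and mean absolute deviation; otherwise the other bound is attained with atoms
`0, m + z, b`. -/
lemma isLUB_of_saturation_le_mean {μ b d m z : ℝ} (hμ : 0 < μ) (hμb : μ < b) (hd0 : 0 < d)
    (hdb : d * b < 2 * μ * (b - μ)) (hm : 0 < m) (hz : 0 ≤ z) (hw : m + z ≤ μ) :
    IsLUB {r : ℝ | ∃ P ∈ meanMADSet μ b d, (∫ s, stopLossBenefit m z s ∂P) = r}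
      (min m (m / (m + z) * (μ - d * (b - (m + z)) / (2 * (b - μ))))) := by
  have hbμ : 0 < b - μ := by linarith
  have hw0 : 0 < m + z := by linarith
  -- `q` is the mass at `b`: with no other atom above `μ`, the mean absolute deviation forces it.
  obtain ⟨q, hq⟩ : ∃ q, q = d / (2 * (b - μ)) := ⟨_, rfl⟩
  have hq0 : 0 < q := by rw [hq]; positivity
  have hdq : d = 2 * q * (b - μ) := by rw [hq]; field_simp
  have hqb : q * b < μ := by
    have : (q * b) * (2 * (b - μ)) < μ * (2 * (b - μ)) := by
      calc (q * b) * (2 * (b - μ)) = d * b := by rw [hdq]; ring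
        _ < _ := by linarith
    exact lt_of_mul_lt_mul_right this (by linarith)
  have hval : d * (b - (m + z)) / (2 * (b - μ)) = q * (b - (m + z)) := by
    rw [hq]; ring
  rw [hval]
  have hbd : ∀ P ∈ meanMADSet μ b d, (∫ s, stopLossBenefit m z s ∂P)
      ≤ min m (m / (m + z) * (μ - q * (b - (m + z)))) := by
    intro P hP
    refine le_min ?_ ?_
    · have := integral_stopLossBenefit_le (m := m) (z := z) m 0 0
        (fun x _ _ => by simpa using stopLossBenefit_le_max m z x)
        (fun x _ _ => by simpa using stopLossBenefit_le_max m z x) hP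
      simpa using this
    · -- The majorant is the chord through `(m + z, m)` up to `μ`, and then runs straight to `(b, m)`.
      have := integral_stopLossBenefit_le (m := m) (z := z) 0 (m / (m + z))
        (-(m / (m + z) * ((b - (m + z)) / (b - μ))))
        (fun x h0 _ => ?_) (fun x h1 h2 => ?_) hP
      · refine this.trans_eq ?_
        rw [hdq]; field_simp; ring
      · rw [zero_add]
        rcases le_total x (m + z) with h | h
        · exact stopLossBenefit_le_chord hw0 hz hm.le (by linarith) h0 h
        · refine (stopLossBenefit_le_max m z x).trans ?_
          rw [div_mul_eq_mul_div, le_div_iff₀ hw0]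
          nlinarith
      · refine (stopLossBenefit_le_max m z x).trans ?_
        have hc : (b - (m + z)) / (b - μ) * (x - μ) ≤ x - (m + z) := by
          rw [div_mul_eq_mul_div, div_le_iff₀ hbμ]
          nlinarith [mul_nonneg (sub_nonneg.2 h2) (sub_nonneg.2 hw)]
        have hx : m + z ≤ x - (b - (m + z)) / (b - μ) * (x - μ) := by linarith
        calc m = m / (m + z) * (m + z) := by field_simp
          _ ≤ m / (m + z) * (x - (b - (m + z)) / (b - μ) * (x - μ)) := by gcongr
          _ = _ := by ring
  refine ⟨by rintro r ⟨P, hP, rfl⟩; exact hbd P hP, fun u hu => hu ?_⟩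
  have hφb : stopLossBenefit m z b = m := stopLossBenefit_of_ge hm.le (by linarith)
  have hφw : stopLossBenefit m z (m + z) = m := stopLossBenefit_of_ge hm.le le_rfl
  have hwmem : m + z ∈ Icc 0 b := ⟨by linarith, by linarith⟩
  have hbmem : b ∈ Icc 0 b := ⟨by linarith, le_rfl⟩
  rcases le_total (m + z) (μ - q * (b - (m + z))) with h | h
  · have hwμ : 0 < μ - (m + z) := by nlinarith
    have hqq : q * (b - μ) / (μ - (m + z)) + q ≤ 1 := by
      rw [← le_sub_iff_add_le, div_le_iff₀ hwμ]
      nlinarith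
    have hpw : q * (b - μ) / (μ - (m + z)) * (μ - (m + z)) = q * (b - μ) := by field_simp
    obtain ⟨pw, hpw'⟩ : ∃ pw, pw = q * (b - μ) / (μ - (m + z)) := ⟨_, rfl⟩
    rw [← hpw'] at hqq hpw
    have hpw0 : 0 ≤ pw := by rw [hpw']; positivity
    obtain ⟨P, hP, hPv⟩ := exists_threePoint (μ := μ) (b := b) (d := d) m z
      (x₁ := m + z) (x₂ := μ) (x₃ := b) (p₁ := pw) (p₂ := 1 - pw - q) (p₃ := q)
      hwmem ⟨hμ.le, hμb.le⟩ hbmem hpw0 (by linarith) hq0.le (by ring) (by linarith)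
      (by rw [abs_of_nonpos (by linarith), abs_of_pos hbμ, sub_self, abs_zero, hdq]; linarith)
    refine ⟨P, hP, ?_⟩
    rw [hPv, hφb, hφw, stopLossBenefit_of_ge hm.le hw, min_eq_left]
    · ring
    · rw [div_mul_eq_mul_div, le_div_iff₀ hw0]
      exact mul_le_mul_of_nonneg_left h hm.le
  · have hpw : (μ - q * b) / (m + z) * (m + z) = μ - q * b := by field_simp
    have hqq : (μ - q * b) / (m + z) + q ≤ 1 := by
      rw [← le_sub_iff_add_le, div_le_iff₀ hw0]
      linarith
    obtain ⟨pw, hpw'⟩ : ∃ pw, pw = (μ - q * b) / (m + z) := ⟨_, rfl⟩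
    rw [← hpw'] at hqq hpw
    have hpw0 : 0 ≤ pw := by rw [hpw']; exact div_nonneg (by linarith) hw0.le
    obtain ⟨P, hP, hPv⟩ := exists_threePoint (μ := μ) (b := b) (d := d) m z
      (x₁ := 0) (x₂ := m + z) (x₃ := b) (p₁ := 1 - pw - q) (p₂ := pw) (p₃ := q)
      ⟨le_rfl, by linarith⟩ hwmem hbmem (by linarith) hpw0 hq0.le (by ring) (by linarith)
      (by rw [abs_of_nonpos (by linarith), abs_of_nonpos (by linarith), abs_of_pos hbμ, hdq]
          linarith)
    refine ⟨P, hP, ?_⟩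
    rw [hPv, hφb, hφw, stopLossBenefit_of_le hm.le hz, min_eq_right]
    · have : μ - q * (b - (m + z)) = (pw + q) * (m + z) := by linarith
      rw [this]; field_simp; ring
    · rw [div_mul_eq_mul_div, div_le_iff₀ hw0]
      exact mul_le_mul_of_nonneg_left h hm.le

/-! ### Saturation at or above the mean -/

/-- The bound `m (1 - P(X = 0))` common to the regimes with `μ ≤ m + z`, where
`P(X = 0) = d / (2μ)` when no other atom lies below `μ`. The majorant rises linearly
from `(0, 0)` to `(μ, m)` and stays at `m`. -/
lemma integral_le_of_mean_le_saturation {μ b d m z : ℝ} (hμ : 0 < μ) (hm : 0 < m) (hz : 0 ≤ z)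
    (hw : μ ≤ z + m) {P : Measure ℝ} (hP : P ∈ meanMADSet μ b d) :
    (∫ s, stopLossBenefit m z s ∂P) ≤ m * (1 - d / (2 * μ)) := by
  have := integral_stopLossBenefit_le (m := m) (z := z) 0 (m / μ) (-(m / μ))
    (fun x h0 h1 => by
      rw [zero_add]
      exact stopLossBenefit_le_chord hμ hz hm.le (by linarith) h0 h1)
    (fun x _ _ => by
      refine (stopLossBenefit_le_max m z x).trans_eq ?_
      field_simp; ring) hP
  refine this.trans_eq ?_
  field_simp; ring

/-- The two-point measure with mass `d / (2μ)` at `0` and the rest at `y`, where `y` is determined by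
the mean. -/
lemma exists_twoPoint {μ b d : ℝ} (m z : ℝ) (hμ : 0 < μ) (hμb : μ < b) (hd0 : 0 < d)
    (hdb : d * b < 2 * μ * (b - μ)) (hm : 0 < m) (hz : 0 ≤ z) :
    0 < 1 - d / (2 * μ) ∧ ∃ y, μ ≤ y ∧ y * (1 - d / (2 * μ)) = μ ∧
      ∃ P ∈ meanMADSet μ b d, (∫ s, stopLossBenefit m z s ∂P)
        = (1 - d / (2 * μ)) * stopLossBenefit m z y := by
  obtain ⟨p, hp⟩ : ∃ p, p = d / (2 * μ) := ⟨_, rfl⟩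
  have hp0 : 0 < p := by rw [hp]; positivity
  have hdp : d = 2 * p * μ := by rw [hp]; field_simp
  rw [← hp]
  have hpb : μ < b * (1 - p) := by
    have : p * b < b - μ := by
      refine lt_of_mul_lt_mul_right (a := 2 * μ) ?_ (by linarith)
      calc p * b * (2 * μ) = d * b := by rw [hdp]; ring
        _ < _ := by linarith
    linarith
  have hp1 : 0 < 1 - p := by
    by_contra hneg
    nlinarith
  have hy : μ / (1 - p) * (1 - p) = μ := by field_simp
  have hyb : μ / (1 - p) ≤ b := by rw [div_le_iff₀ hp1]; exact hpb.le
  have hyμ : μ ≤ μ / (1 - p) := by rw [le_div_iff₀ hp1]; nlinarith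
  obtain ⟨y, hydef⟩ : ∃ y, y = μ / (1 - p) := ⟨_, rfl⟩
  rw [← hydef] at hy hyb hyμ
  obtain ⟨P, hP, hPv⟩ := exists_threePoint (μ := μ) (b := b) (d := d) m z
      (x₁ := 0) (x₂ := y) (x₃ := 0) (p₁ := p) (p₂ := 1 - p) (p₃ := 0)
      ⟨le_rfl, by linarith⟩ ⟨by linarith, hyb⟩ ⟨le_rfl, by linarith⟩ hp0.le hp1.le le_rfl
      (by ring) (by linarith)
      (by rw [abs_of_nonpos (by linarith), abs_of_nonneg (by linarith), hdp]
          linarith)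
  refine ⟨hp1, y, hyμ, hy, P, hP, ?_⟩
  rw [hPv, stopLossBenefit_of_le hm.le hz]
  ring

/-- If `z ≤ μ ≤ z + m`, the two-point measure is optimal whichever term of the minimum is smaller:
the benefit at its upper atom `y ≥ μ ≥ z` is `min m (y - z)`. -/
lemma isLUB_of_mean_between {μ b d m z : ℝ} (hμ : 0 < μ) (hμb : μ < b) (hd0 : 0 < d)
    (hdb : d * b < 2 * μ * (b - μ)) (hm : 0 < m) (hz : 0 ≤ z) (hzμ : z ≤ μ) (hw : μ ≤ z + m) :
    IsLUB {r : ℝ | ∃ P ∈ meanMADSet μ b d, (∫ s, stopLossBenefit m z s ∂P) = r}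
      (min (m * (1 - d / (2 * μ))) (z * (d / (2 * μ) - 1) + μ)) := by
  refine ⟨?_, fun u hu => hu ?_⟩
  · rintro r ⟨P, hP, rfl⟩
    refine le_min (integral_le_of_mean_le_saturation hμ hm hz hw hP) ?_
    -- The majorant is the chord from `(0, 0)` to `(μ, μ - z)`, continued by `x - z`.
    have := integral_stopLossBenefit_le (m := m) (z := z) 0 ((μ - z) / μ) (z / μ)
      (fun x h0 h1 => by
        rw [zero_add]
        exact stopLossBenefit_le_chord hμ hz (by linarith) le_rfl h0 h1)
      (fun x h1 _ => by
        have : 0 + (μ - z) / μ * x + z / μ * (x - μ) = x - z := by field_simp; ring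
        rw [this]
        exact stopLossBenefit_le_of (by linarith) le_rfl) hP
    refine this.trans_eq ?_
    field_simp; ring
  · obtain ⟨hp1, y, hyμ, hy, P, hP, hPv⟩ := exists_twoPoint m z hμ hμb hd0 hdb hm hz
    refine ⟨P, hP, ?_⟩
    rw [hPv, stopLossBenefit, max_eq_left (by linarith), mul_min_of_nonneg _ _ hp1.le]
    congr 1
    · ring
    · linear_combination hy

/-- If `μ ≤ z`, the two-point measure is optimal when its upper atom lies beyond `m + z`, and
otherwise the atoms `0, μ, m + z` are. -/
lemma isLUB_of_mean_le_retention {μ b d m z : ℝ} (hμ : 0 < μ) (hμb : μ < b) (hd0 : 0 < d)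
    (hdb : d * b < 2 * μ * (b - μ)) (hm : 0 < m) (hμz : μ ≤ z) (hwb : z + m ≤ b) :
    IsLUB {r : ℝ | ∃ P ∈ meanMADSet μ b d, (∫ s, stopLossBenefit m z s ∂P) = r}
      (min (m * (1 - d / (2 * μ))) (d * m / (2 * (m + z - μ)))) := by
  have hz : 0 ≤ z := by linarith
  have hwμ : 0 < m + z - μ := by linarith
  have hbd : ∀ P ∈ meanMADSet μ b d, (∫ s, stopLossBenefit m z s ∂P)
      ≤ min (m * (1 - d / (2 * μ))) (d * m / (2 * (m + z - μ))) := by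
    intro P hP
    refine le_min (integral_le_of_mean_le_saturation hμ hm hz (by linarith) hP) ?_
    -- The majorant vanishes on `[0, μ]` and rises linearly through `(m + z, m)`.
    have := integral_stopLossBenefit_le (m := m) (z := z) 0 0 (m / (m + z - μ))
      (fun x _ h1 => by
        rw [stopLossBenefit_of_le hm.le (by linarith)]; simp)
      (fun x h1 _ => by
        have hxμ : 0 ≤ x - μ := by linarith
        rw [zero_mul, add_zero, zero_add]
        rcases le_total x (m + z) with h | h
        · refine stopLossBenefit_le_of (by positivity) ?_
          rw [div_mul_eq_mul_div, le_div_iff₀ hwμ]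
          nlinarith
        · refine (stopLossBenefit_le_max m z x).trans ?_
          rw [div_mul_eq_mul_div, le_div_iff₀ hwμ]
          nlinarith) hP
    refine this.trans_eq ?_
    field_simp; ring
  refine ⟨by rintro r ⟨P, hP, rfl⟩; exact hbd P hP, fun u hu => ?_⟩
  obtain ⟨hp1, y, hyμ, hy, P, hP, hPv⟩ := exists_twoPoint m z hμ hμb hd0 hdb hm hz
  rcases le_total (m + z) y with h | h
  · rw [stopLossBenefit_of_ge hm.le h] at hPv
    exact (min_le_left _ _).trans (hu ⟨P, hP, by rw [hPv, mul_comm]⟩)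
  · have hp0 : 0 < d / (2 * μ) := by positivity
    have hdp : d = 2 * (d / (2 * μ)) * μ := by field_simp
    have hdr : d = 2 * (d / (2 * (m + z - μ))) * (m + z - μ) := by field_simp
    have hr0 : 0 < d / (2 * (m + z - μ)) := by positivity
    have hv : d * m / (2 * (m + z - μ)) = d / (2 * (m + z - μ)) * m := by ring
    rw [hv]
    obtain ⟨p, hp⟩ : ∃ p, p = d / (2 * μ) := ⟨_, rfl⟩
    obtain ⟨q, hq⟩ : ∃ q, q = d / (2 * (m + z - μ)) := ⟨_, rfl⟩
    rw [← hp] at hdp hp0 hp1 hy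
    rw [← hq] at hdr hr0 ⊢
    have hpq : p + q ≤ 1 := by
      have h1 : μ ≤ (m + z) * (1 - p) := hy ▸ mul_le_mul_of_nonneg_right h hp1.le
      have h2 : (p + q) * (m + z - μ) ≤ 1 * (m + z - μ) := by linarith
      exact le_of_mul_le_mul_right h2 hwμ
    obtain ⟨Q, hQ, hQv⟩ := exists_threePoint (μ := μ) (b := b) (d := d) m z
      (x₁ := 0) (x₂ := μ) (x₃ := m + z) (p₁ := p) (p₂ := 1 - p - q) (p₃ := q)
      ⟨le_rfl, by linarith⟩ ⟨hμ.le, hμb.le⟩ ⟨by linarith, by linarith⟩ hp0.le (by linarith) hr0.le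
      (by ring) (by linarith)
      (by rw [abs_of_nonpos (by linarith), sub_self, abs_zero, abs_of_pos hwμ]
          linarith)
    refine (min_le_right _ _).trans (hu ⟨Q, hQ, ?_⟩)
    rw [hQv, stopLossBenefit_of_le hm.le hz, stopLossBenefit_of_le hm.le hμz,
      stopLossBenefit_of_ge hm.le le_rfl]
    ring

/-- Theorem 7 (stop-loss reinsurance): worst-case expected insurer's benefit
under mean-MAD ambiguity, in the three regimes for the retention limit `z`
and maximum coverage `m`. -/
theorem sup_stopLossBenefit_meanMAD (μ b d m z : ℝ)
    (hμ : 0 < μ) (hμb : μ < b) (hd0 : 0 < d) (hd : d < 2 * μ * (b - μ) / b)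
    (hm : 0 < m) (hz : 0 ≤ z) :
    (m + z ≤ μ →
      IsLUB {r : ℝ | ∃ P ∈ meanMADSet μ b d, (∫ s, stopLossBenefit m z s ∂P) = r}
        (min m (m / (m + z) * (μ - d * (b - (m + z)) / (2 * (b - μ)))))) ∧
    (z ≤ μ → μ ≤ z + m → z + m ≤ b →
      IsLUB {r : ℝ | ∃ P ∈ meanMADSet μ b d, (∫ s, stopLossBenefit m z s ∂P) = r}
        (min (m * (1 - d / (2 * μ))) (z * (d / (2 * μ) - 1) + μ))) ∧
    (μ ≤ z → z + m ≤ b →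
      IsLUB {r : ℝ | ∃ P ∈ meanMADSet μ b d, (∫ s, stopLossBenefit m z s ∂P) = r}
        (min (m * (1 - d / (2 * μ))) (d * m / (2 * (m + z - μ))))) := by
  have hdb : d * b < 2 * μ * (b - μ) := (lt_div_iff₀ (hμ.trans hμb)).mp hd
  exact ⟨fun hw => isLUB_of_saturation_le_mean hμ hμb hd0 hdb hm hz hw,
    fun hzμ hw _ => isLUB_of_mean_between hμ hμb hd0 hdb hm hz hzμ hw,
    fun hμz hwb => isLUB_of_mean_le_retention hμ hμb hd0 hdb hm hμz hwb⟩
end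

section
/- Let 0 < μ < b, 0 < d < 2μ(b−μ)/b, and z ∈ [0, b]. Then the supremum of ∫ max{s − z, 0} dP(s) over all P ∈ 𝒫(μ,b,d) equals z(d/(2μ) − 1) + μ if z ≤ μ, and d(b−z)/(2(b−μ)) if z ≥ μ. -/
/-!
The payment `s ↦ max (s - z) 0` is convex, so on `[0, b]` it lies below its piecewise linear
interpolant at the nodes `0, μ, b`. That interpolant has the form `c + β (s - μ) + γ |s - μ|`, whose
integral `c + γ d` is the same for every measure in the ambiguity set; this is the upper bound
(`integral_stopLoss_le`). It is attained by the three-point measure on the nodes with weights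
`d / (2μ)` at `0`, `d / (2(b - μ))` at `b` and the remaining mass at `μ`
(`threePoint_mem_meanMADSet`); the hypothesis on `d` makes the remaining mass positive.
-/


open MeasureTheory Set

/-- An affine function of `s` and `|s - μ|` that dominates the payment on `[0, b]` bounds the
expected payment over the ambiguity set. -/
lemma integral_stopLoss_le {μ b d z c β γ : ℝ} {P : Measure ℝ} (hP : P ∈ meanMADSet μ b d)
    (h : ∀ s ∈ Icc 0 b, max (s - z) 0 ≤ c + β * (s - μ) + γ * |s - μ|) :
    ∫ s, max (s - z) 0 ∂P ≤ c + γ * d := by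
  obtain ⟨hprob, hsupp, hmean, hmad⟩ := hP
  have hae : ∀ᵐ s ∂P, s ∈ Icc 0 b := (prob_compl_eq_zero_iff measurableSet_Icc).2 hsupp
  have hint : ∀ f : ℝ → ℝ, Continuous f → Integrable f P := by
    intro f hf
    obtain ⟨C, hC⟩ := (isCompact_Icc (a := (0 : ℝ)) (b := b)).exists_bound_of_continuousOn
      hf.continuousOn
    exact Integrable.of_bound hf.aestronglyMeasurable C (hae.mono hC)
  have hid : Integrable (fun s : ℝ => s) P := hint _ continuous_id
  have habs : Integrable (fun s : ℝ => |s - μ|) P := hint _ (by fun_prop)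
  calc ∫ s, max (s - z) 0 ∂P
      ≤ ∫ s, (c + β * (s - μ) + γ * |s - μ|) ∂P :=
        integral_mono_ae (hint _ (by fun_prop)) (hint _ (by fun_prop)) (hae.mono h)
    _ = c + γ * d := by
        rw [integral_add (hint _ (by fun_prop)) (hint _ (by fun_prop)),
          integral_add (hint _ (by fun_prop)) (hint _ (by fun_prop)),
          integral_const_mul, integral_const_mul, integral_sub hid (hint _ (by fun_prop)),
          hmean, hmad]
        simp

/-- The measure with masses `p`, `q`, `r` at `0`, `μ`, `b`; negative masses are truncated to `0`. -/
noncomputable def threePoint (μ b p q r : ℝ) : Measure ℝ :=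
  ENNReal.ofReal p • Measure.dirac 0 + ENNReal.ofReal q • Measure.dirac μ +
    ENNReal.ofReal r • Measure.dirac b

lemma integral_threePoint {μ b p q r : ℝ} (hp : 0 ≤ p) (hq : 0 ≤ q) (hr : 0 ≤ r) (f : ℝ → ℝ) :
    ∫ s, f s ∂threePoint μ b p q r = p * f 0 + q * f μ + r * f b := by
  have hint : ∀ a w : ℝ, Integrable f (ENNReal.ofReal w • Measure.dirac a) := fun a w =>
    (integrable_dirac (by simp)).smul_measure ENNReal.ofReal_ne_top
  rw [threePoint, integral_add_measure ((hint _ _).add_measure (hint _ _)) (hint _ _),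
    integral_add_measure (hint _ _) (hint _ _)]
  simp [integral_smul_measure, ENNReal.toReal_ofReal, hp, hq, hr]

/-- The extremal measure belongs to the ambiguity set, and the expected payment under it is a sum
of two terms since the payment vanishes at `0`. -/
lemma threePoint_mem_meanMADSet {μ b d z : ℝ} (hμ : 0 < μ) (hμb : μ < b) (hd0 : 0 < d)
    (hd : d < 2 * μ * (b - μ) / b) (hz : 0 ≤ z) :
    ∃ P ∈ meanMADSet μ b d, ∫ s, max (s - z) 0 ∂P =
      (1 - d / (2 * μ) - d / (2 * (b - μ))) * max (μ - z) 0 +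
        d / (2 * (b - μ)) * max (b - z) 0 := by
  have hb : 0 < b := hμ.trans hμb
  have hbμ : 0 < b - μ := sub_pos.2 hμb
  have hp : 0 ≤ d / (2 * μ) := by positivity
  have hr : 0 ≤ d / (2 * (b - μ)) := by positivity
  have hq : 0 ≤ 1 - d / (2 * μ) - d / (2 * (b - μ)) := by
    have h1 : 1 - d / (2 * μ) - d / (2 * (b - μ)) =
        (2 * μ * (b - μ) - d * b) / (2 * μ * (b - μ)) := by
      field_simp
      ring
    rw [h1]
    rw [lt_div_iff₀ hb] at hd
    exact div_nonneg (by linarith) (by positivity)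
  have hsum : ENNReal.ofReal (d / (2 * μ)) +
      ENNReal.ofReal (1 - d / (2 * μ) - d / (2 * (b - μ))) +
      ENNReal.ofReal (d / (2 * (b - μ))) = 1 := by
    rw [← ENNReal.ofReal_add hp hq, ← ENNReal.ofReal_add (add_nonneg hp hq) hr,
      ← ENNReal.ofReal_one]
    congr 1
    ring
  refine ⟨threePoint μ b (d / (2 * μ)) (1 - d / (2 * μ) - d / (2 * (b - μ)))
    (d / (2 * (b - μ))), ⟨⟨?_⟩, ?_, ?_, ?_⟩, ?_⟩
  · simpa [threePoint] using hsum
  · simpa [threePoint, hμ.le, hμb.le, hb.le] using hsum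
  · rw [integral_threePoint hp hq hr]
    field_simp
    ring
  · rw [integral_threePoint hp hq hr]
    simp only [zero_sub, abs_neg, sub_self, abs_zero, abs_of_pos hμ, abs_of_pos hbμ]
    field_simp
    ring
  · rw [integral_threePoint hp hq hr, max_eq_right (by linarith : 0 - z ≤ 0)]
    ring

/-- Worst-case expected (uncapped) stop-loss payment `E_P[max{S − z, 0}]` with
retention limit `z`, under mean-MAD ambiguity. -/
theorem sup_stopLoss_meanMAD (μ b d z : ℝ)
    (hμ : 0 < μ) (hμb : μ < b) (hd0 : 0 < d) (hd : d < 2 * μ * (b - μ) / b)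
    (hz : z ∈ Icc 0 b) :
    (z ≤ μ →
      IsLUB {r : ℝ | ∃ P ∈ meanMADSet μ b d, (∫ s, max (s - z) 0 ∂P) = r}
        (z * (d / (2 * μ) - 1) + μ)) ∧
    (μ ≤ z →
      IsLUB {r : ℝ | ∃ P ∈ meanMADSet μ b d, (∫ s, max (s - z) 0 ∂P) = r}
        (d * (b - z) / (2 * (b - μ)))) := by
  obtain ⟨hz0, hzb⟩ := hz
  have hbμ : 0 < b - μ := sub_pos.2 hμb
  obtain ⟨P, hP, hPint⟩ := threePoint_mem_meanMADSet hμ hμb hd0 hd hz0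
  rw [max_eq_left (sub_nonneg.2 hzb)] at hPint
  refine ⟨fun hzμ => IsGreatest.isLUB ⟨⟨P, hP, ?_⟩, ?_⟩,
    fun hμz => IsGreatest.isLUB ⟨⟨P, hP, ?_⟩, ?_⟩⟩
  · rw [hPint, max_eq_left (sub_nonneg.2 hzμ)]
    field_simp
    ring
  · rintro _ ⟨Q, hQ, rfl⟩
    -- The interpolant has slope `1 - z / μ` on `[0, μ]` and slope `1` on `[μ, b]`.
    have key := integral_stopLoss_le (z := z) (c := μ - z) (β := 1 - z / (2 * μ))
      (γ := z / (2 * μ)) hQ (by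
        rintro s ⟨hs0, -⟩
        rcases le_total s μ with hs | hs
        · have h1 : μ - z + (1 - z / (2 * μ)) * (s - μ) + z / (2 * μ) * |s - μ| =
              s * (μ - z) / μ := by
            rw [abs_of_nonpos (sub_nonpos.2 hs)]
            field_simp
            ring
          rw [h1]
          refine max_le ?_ (div_nonneg (mul_nonneg hs0 (sub_nonneg.2 hzμ)) hμ.le)
          rw [le_div_iff₀ hμ]
          nlinarith [mul_nonneg hz0 (sub_nonneg.2 hs)]
        · rw [abs_of_nonneg (sub_nonneg.2 hs)]
          exact max_le (by linarith) (by linarith))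
    calc _ ≤ _ := key
      _ = _ := by ring
  · rw [hPint, max_eq_right (sub_nonpos.2 hμz)]
    ring
  · rintro _ ⟨Q, hQ, rfl⟩
    -- The interpolant is `0` on `[0, μ]` and has slope `(b - z) / (b - μ)` on `[μ, b]`.
    have key := integral_stopLoss_le (z := z) (c := 0) (β := (b - z) / (2 * (b - μ)))
      (γ := (b - z) / (2 * (b - μ))) hQ (by
        rintro s ⟨-, hsb⟩
        rcases le_total s μ with hs | hs
        · rw [abs_of_nonpos (sub_nonpos.2 hs)]
          exact max_le (by linarith) (by linarith)
        · have h1 : 0 + (b - z) / (2 * (b - μ)) * (s - μ) + (b - z) / (2 * (b - μ)) * |s - μ| =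
              (b - z) * (s - μ) / (b - μ) := by
            rw [abs_of_nonneg (sub_nonneg.2 hs)]
            field_simp
            ring
          rw [h1]
          refine max_le ?_
            (div_nonneg (mul_nonneg (sub_nonneg.2 hzb) (sub_nonneg.2 hs)) hbμ.le)
          rw [le_div_iff₀ hbμ]
          nlinarith [mul_nonneg (sub_nonneg.2 hμz) (sub_nonneg.2 hsb)])
    calc _ ≤ _ := key
      _ = _ := by ring
end
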